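/- Let 0<s<1 and let Ω satisfy (H) with Ω(π/2)=1, and suppose there exist κ>2, C>0 and δ₀>0 such that Ω(θ)≤1+C·|θ−π/2|^κ whenever |θ−π/2|≤δ₀. Then for every δ>0 there exists a Borel map T:ℝ²→ℝ² with |T(x)−x|≤δ for all x∈ℝ² such that E[T_#ρ_{1D}] < E[ρ_{1D}]; in particular ρ_{1D} is not a Wasserstein-∞ local minimizer of E. -/

import Mathlib

/-!
Move the point `(0, t)` of the vertical axis horizontally by `ε g(t)`, where `g` is `1`-Lipschitz.
Two points with height difference `b = t - u` then form a vector of slope `q = ε (g t - g u) / b`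
against the vertical, with `|q| ≤ ε`, and the interaction changes in three ways: the factor
`(1 + q²)^{-s/2}` lowers the repulsion by at least `(s/4) q² |b|^{-s}`, the anisotropy raises it by
at most `C |q|^κ |b|^{-s}`, and the confinement costs `ε² (g t - g u)²`. As `κ > 2`, for small `ε`
the anisotropic term is at most half of the gain, whence the pointwise bound (`kernel_tilt`)

  `W(ε (g t - g u), b) ≤ W(0, b) + ε² (g t - g u)² - (s/8) ε² ((g t - g u)/b)² |b|^{-s}`.

It remains to find a Lipschitz `g` for which the double integral of the two last terms against
`ρ₁ ⊗ ρ₁` is negative. A narrow tent of height and half-width `h` works: the confinement cost is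
`O(h³)` (`tent_sq_le`), while on `[0, h]²` the difference quotient of `g` is `-1` and
`|b|^{-s} ≥ h^{-s}`, so that the gain is at least a constant times `h^{2-s}` (`tent_slope_ge`).
Of `ρ₁` only the following matters: it is bounded with compact support, so that the energy of
`ρ_{1D}` is finite (`energy_finite`), and bounded below near `0` (`rho1meas_ge`).
-/

open MeasureTheory Real Filter Set Topology
open scoped ENNReal

noncomputable section

namespace Aniso

/-- The Euclidean norm on `ℝ × ℝ`. -/
def nrm (x : ℝ × ℝ) : ℝ := Real.sqrt (x.1 ^ 2 + x.2 ^ 2)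

/-- The angle `θ(x) ∈ [-π, π)` of a nonzero point `x ∈ ℝ²`,
so that `x / |x| = (cos (ang x), sin (ang x))`. -/
def ang (x : ℝ × ℝ) : ℝ :=
  if Complex.arg ⟨x.1, x.2⟩ = π then -π else Complex.arg ⟨x.1, x.2⟩

/-- The unit vector `e_φ = (cos φ, sin φ)`. -/
def eVec (φ : ℝ) : ℝ × ℝ := (Real.cos φ, Real.sin φ)

/-- The constant `τ_s = (2π)^{-s} Γ(s) cos(sπ/2)`. -/
def tauC (s : ℝ) : ℝ := (2 * π) ^ (-s) * Real.Gamma s * Real.cos (s * π / 2)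

/-- The constant `c_s = π^{s-1} Γ((2-s)/2) / Γ(s/2)`. -/
def cC (s : ℝ) : ℝ := π ^ (s - 1) * Real.Gamma ((2 - s) / 2) / Real.Gamma (s / 2)

/-- Hypothesis (H): `Ω` is smooth, 2π-periodic, strictly positive and π-periodic. -/
def SatisfiesH (Ω : ℝ → ℝ) : Prop :=
  ContDiff ℝ (⊤ : ℕ∞) Ω ∧ (∀ θ, Ω (θ + 2 * π) = Ω θ) ∧ (∀ θ, 0 < Ω θ) ∧ ∀ θ, Ω (θ + π) = Ω θ

/-- Hypothesis (h): `ω` is smooth, 2π-periodic, nonnegative, not identically zero,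
π-periodic, and `ω(π/2) = 0`. -/
def Satisfiesh (ω : ℝ → ℝ) : Prop :=
  ContDiff ℝ (⊤ : ℕ∞) ω ∧ (∀ θ, ω (θ + 2 * π) = ω θ) ∧ (∀ θ, 0 ≤ ω θ) ∧ (∃ θ, ω θ ≠ 0) ∧
    (∀ θ, ω (θ + π) = ω θ) ∧ ω (π / 2) = 0

/-- The transformed angle function `Ω̃`. -/
def Omt (s : ℝ) (Ω : ℝ → ℝ) (φ : ℝ) : ℝ :=
  tauC (2 - s) * (∫ θ in (-π)..π, |Real.cos (φ - θ)| ^ (-2 + s) * (Ω θ - Ω (φ + π / 2)))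
    + cC s * Ω (φ + π / 2)

/-- The interaction potential `W(x) = |x|^{-s} Ω(θ(x)) + |x|²` as an `[0,∞]`-valued
kernel, with `W(0) = ∞`. -/
def Wkernel (s : ℝ) (Ω : ℝ → ℝ) (x : ℝ × ℝ) : ℝ≥0∞ :=
  if x = 0 then ⊤ else ENNReal.ofReal (nrm x ^ (-s) * Ω (ang x) + nrm x ^ 2)

/-- The interaction energy `E[ρ] = (1/2) ∬ W(x-y) dρ(y) dρ(x) ∈ [0,∞]`. -/
def energy (s : ℝ) (Ω : ℝ → ℝ) (ρ : Measure (ℝ × ℝ)) : ℝ≥0∞ :=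
  (1 / 2 : ℝ≥0∞) * ∫⁻ x, ∫⁻ y, Wkernel s Ω (x - y) ∂ρ ∂ρ

/-- The real-valued interaction potential (with junk value `0` at the origin,
which is Lebesgue negligible). -/
def Wr (s : ℝ) (Ω : ℝ → ℝ) (x : ℝ × ℝ) : ℝ := nrm x ^ (-s) * Ω (ang x) + nrm x ^ 2

/-- `ρ` minimizes the energy `E` among probability measures on `ℝ²`. -/
def IsMinimizer (E : Measure (ℝ × ℝ) → ℝ≥0∞) (ρ : Measure (ℝ × ℝ)) : Prop :=
  IsProbabilityMeasure ρ ∧ ∀ μ : Measure (ℝ × ℝ), IsProbabilityMeasure μ → E ρ ≤ E μ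

/-- `ρ` is the unique minimizer of `E` up to translation: it is a minimizer and every
minimizer is a translate of it. -/
def IsUniqueMinimizer (E : Measure (ℝ × ℝ) → ℝ≥0∞) (ρ : Measure (ℝ × ℝ)) : Prop :=
  IsMinimizer E ρ ∧ ∀ μ, IsMinimizer E μ → ∃ v : ℝ × ℝ, μ = Measure.map (fun x => x + v) ρ

def R2 (s : ℝ) : ℝ := (8 * Real.sin (s * π / 2) / (s ^ 2 * (2 + s) * π)) ^ (-(1 / (s + 2)))

def C2 (s : ℝ) : ℝ := 4 * Real.sin (s * π / 2) / (s ^ 2 * π ^ 2)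

/-- The density `ρ₂(x) = C₂ (R₂² - |x|²)₊^{s/2}`. -/
def rho2 (s : ℝ) (x : ℝ × ℝ) : ℝ := C2 s * (max (R2 s ^ 2 - nrm x ^ 2) 0) ^ (s / 2)

def rho2meas (s : ℝ) : Measure (ℝ × ℝ) := volume.withDensity fun x => ENNReal.ofReal (rho2 s x)

/-- Counterclockwise rotation of `ℝ²` by the angle `η`. -/
def Rot (η : ℝ) (x : ℝ × ℝ) : ℝ × ℝ :=
  (x.1 * Real.cos η - x.2 * Real.sin η, x.1 * Real.sin η + x.2 * Real.cos η)

/-- The measure `ρ_{a,b,η}`: the pushforward of `ρ₂(x) dx` under `x ↦ R_η (a x₁, b x₂)`. -/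
def rhoE (s a b η : ℝ) : Measure (ℝ × ℝ) :=
  Measure.map (fun x => Rot η (a * x.1, b * x.2)) (rho2meas s)

/-- The measure `ρ_{a,b} = ρ_{a,b,0}`. -/
def rhoAB (s a b : ℝ) : Measure (ℝ × ℝ) := rhoE s a b 0

/-- The Beta function. -/
def BetaR (x y : ℝ) : ℝ := Real.Gamma x * Real.Gamma y / Real.Gamma (x + y)

def C1 (s : ℝ) : ℝ := 2 * Real.cos (s * π / 2) / (s * (s + 1) * π)

def R1 (s : ℝ) : ℝ := (C1 s * BetaR (1 / 2) ((3 + s) / 2)) ^ (-(1 / (s + 2)))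

/-- The density `ρ₁(t) = C₁ (R₁² - t²)₊^{(1+s)/2}` on `ℝ`. -/
def rho1 (s t : ℝ) : ℝ := C1 s * (max (R1 s ^ 2 - t ^ 2) 0) ^ ((1 + s) / 2)

def rho1meas (s : ℝ) : Measure ℝ := volume.withDensity fun t => ENNReal.ofReal (rho1 s t)

/-- The measure `ρ_{1D}`: the pushforward of `ρ₁(t) dt` under `t ↦ (0, t)`. -/
def rho1D (s : ℝ) : Measure (ℝ × ℝ) := Measure.map (fun t : ℝ => ((0 : ℝ), t)) (rho1meas s)

/-- The support of a measure: points all of whose neighborhoods have positive measure. -/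
def msupport {α : Type*} [TopologicalSpace α] [MeasurableSpace α] (μ : Measure α) : Set α :=
  {x | ∀ U ∈ 𝓝 x, 0 < μ U}

def Acoef (s : ℝ) (Ω : ℝ → ℝ) (a b : ℝ) : ℝ :=
  tauC s * (R1 s / R2 s) ^ (2 + s) *
    ∫ φ in (-π)..π,
      (a ^ 2 * Real.cos φ ^ 2 + b ^ 2 * Real.sin φ ^ 2) ^ (-(2 + s) / 2) *
        Real.cos φ ^ 2 * Omt s Ω φ

def Bcoef (s : ℝ) (Ω : ℝ → ℝ) (a b : ℝ) : ℝ :=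
  tauC s * (R1 s / R2 s) ^ (2 + s) *
    ∫ φ in (-π)..π,
      (a ^ 2 * Real.cos φ ^ 2 + b ^ 2 * Real.sin φ ^ 2) ^ (-(2 + s) / 2) *
        Real.sin φ ^ 2 * Omt s Ω φ

def Dcoef (s : ℝ) (Ω : ℝ → ℝ) (a b : ℝ) : ℝ :=
  tauC s * (R1 s / R2 s) ^ (2 + s) *
    ∫ φ in (-π)..π,
      (a ^ 2 * Real.cos φ ^ 2 + b ^ 2 * Real.sin φ ^ 2) ^ (-(2 + s) / 2) *
        (Real.cos φ * Real.sin φ) * Omt s Ω φ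

def Mfun (s : ℝ) (Ω : ℝ → ℝ) (a b : ℝ) : ℝ :=
  tauC s * (R1 s / R2 s) ^ (2 + s) *
    ∫ φ in (-π)..π, (a ^ 2 * Real.cos φ ^ 2 + b ^ 2 * Real.sin φ ^ 2) ^ (-s / 2) * Omt s Ω φ

def calE (s : ℝ) (Ω : ℝ → ℝ) (a b : ℝ) : ℝ := Mfun s Ω a b + s / 2 * (a ^ 2 + b ^ 2)

/-- A measure has compact support. -/
def HasCompactSupportM (ρ : Measure (ℝ × ℝ)) : Prop :=
  ∃ K : Set (ℝ × ℝ), IsCompact K ∧ ρ Kᶜ = 0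

/-- The linear interpolation `(1-t) ρ₀ + t ρ₁`. -/
def mix (ρ₀ ρ₁ : Measure (ℝ × ℝ)) (t : ℝ) : Measure (ℝ × ℝ) :=
  ENNReal.ofReal (1 - t) • ρ₀ + ENNReal.ofReal t • ρ₁

/-- Linear interpolation convexity (LIC): for any two distinct compactly supported
probability measures of finite energy with the same center of mass, the energy is
strictly convex along their linear interpolation. -/
def LIC (s : ℝ) (Ω : ℝ → ℝ) : Prop :=
  ∀ ρ₀ ρ₁ : Measure (ℝ × ℝ), IsProbabilityMeasure ρ₀ → IsProbabilityMeasure ρ₁ →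
    HasCompactSupportM ρ₀ → HasCompactSupportM ρ₁ →
    energy s Ω ρ₀ < ⊤ → energy s Ω ρ₁ < ⊤ → ρ₀ ≠ ρ₁ →
    (∫ x, x ∂ρ₀) = (∫ x, x ∂ρ₁) →
    StrictConvexOn ℝ (Set.Icc (0 : ℝ) 1) fun t => (energy s Ω (mix ρ₀ ρ₁ t)).toReal

/-- The interaction energy of a bounded compactly supported signed density. -/
def energyR (s : ℝ) (Ω : ℝ → ℝ) (μ : ℝ × ℝ → ℝ) : ℝ :=
  (1 / 2) * ∫ x : ℝ × ℝ, (∫ y : ℝ × ℝ, Wr s Ω (x - y) * μ y) * μ x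

/-- The logarithmic potential `W_log(x) = -ln|x| + Ω(θ(x)) + |x|²` (real valued,
with junk value at the origin). -/
def Wlog (Ω : ℝ → ℝ) (x : ℝ × ℝ) : ℝ := -Real.log (nrm x) + Ω (ang x) + nrm x ^ 2

def WlogKernel (Ω : ℝ → ℝ) (x : ℝ × ℝ) : ℝ≥0∞ :=
  if x = 0 then ⊤ else ENNReal.ofReal (Wlog Ω x)

/-- The logarithmic interaction energy. -/
def energyLog (Ω : ℝ → ℝ) (ρ : Measure (ℝ × ℝ)) : ℝ≥0∞ :=
  (1 / 2 : ℝ≥0∞) * ∫⁻ x, ∫⁻ y, WlogKernel Ω (x - y) ∂ρ ∂ρ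

/-- The family `W_{(s)}(x) = |x|^{-s} (1/s + Ω(θ(x))) - 1/s + |x|²`. -/
def Wsfam (s : ℝ) (Ω : ℝ → ℝ) (x : ℝ × ℝ) : ℝ :=
  nrm x ^ (-s) * (1 / s + Ω (ang x)) - 1 / s + nrm x ^ 2

/-- The transformed angle function of `W_{(s)}`. -/
def Omts (s : ℝ) (Ω : ℝ → ℝ) (φ : ℝ) : ℝ :=
  tauC (2 - s) * (∫ θ in (-π)..π, |Real.cos (φ - θ)| ^ (-2 + s) * (Ω θ - Ω (φ + π / 2)))
    + cC s * (1 / s + Ω (φ + π / 2))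

/-- The truncated integral appearing in the principal value defining `Ω̃_log`. -/
def pvInt (Ω : ℝ → ℝ) (φ δ : ℝ) : ℝ :=
  ∫ θ in {θ : ℝ | θ ∈ Set.Icc (-π) π ∧ δ ≤ |Real.cos (φ - θ)|},
    |Real.cos (φ - θ)| ^ (-(2 : ℝ)) * (Ω θ - Ω (φ + π / 2))

def OmtLogFam (Ω : ℝ → ℝ) (φ δ : ℝ) : ℝ :=
  -((2 * π) ^ (-(2 : ℝ))) * pvInt Ω φ δ + (2 * π)⁻¹

/-- The transformed angle function `Ω̃_log`, defined as the principal value limit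
(via `limUnder`, which returns the limit whenever it exists). -/
def OmtLog (Ω : ℝ → ℝ) (φ : ℝ) : ℝ := limUnder (𝓝[>] (0 : ℝ)) (OmtLogFam Ω φ)

/-- The closed elliptical region `B(0; a, b)`. -/
def ellipseSet (a b : ℝ) : Set (ℝ × ℝ) := {x | x.1 ^ 2 / a ^ 2 + x.2 ^ 2 / b ^ 2 ≤ 1}

def ALog (Ω : ℝ → ℝ) (a b : ℝ) : ℝ :=
  ∫ φ in (-π)..π,
    (a ^ 2 * Real.cos φ ^ 2 + b ^ 2 * Real.sin φ ^ 2)⁻¹ * Real.cos φ ^ 2 * OmtLog Ω φ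

def BLog (Ω : ℝ → ℝ) (a b : ℝ) : ℝ :=
  ∫ φ in (-π)..π,
    (a ^ 2 * Real.cos φ ^ 2 + b ^ 2 * Real.sin φ ^ 2)⁻¹ * Real.sin φ ^ 2 * OmtLog Ω φ

def DLog (Ω : ℝ → ℝ) (a b : ℝ) : ℝ :=
  ∫ φ in (-π)..π,
    (a ^ 2 * Real.cos φ ^ 2 + b ^ 2 * Real.sin φ ^ 2)⁻¹ *
      (Real.cos φ * Real.sin φ) * OmtLog Ω φ

/-- The uniform probability measure on the rotated ellipse `B(0; a, b, η)`. -/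
def unifEllipse (a b η : ℝ) : Measure (ℝ × ℝ) :=
  volume.withDensity ((Rot η '' ellipseSet a b).indicator fun _ => ENNReal.ofReal ((π * a * b)⁻¹))

/-- The pushforward of the density `(2/(πb²)) (b² - t²)₊^{1/2} dt` under `t ↦ R_η (0, t)`. -/
def semicirc (b η : ℝ) : Measure (ℝ × ℝ) :=
  Measure.map (fun t : ℝ => Rot η (0, t))
    (volume.withDensity fun t =>
      ENNReal.ofReal (2 / (π * b ^ 2) * (max (b ^ 2 - t ^ 2) 0) ^ ((1 : ℝ) / 2)))

/-- The vertical semicircle measure `ρ_{1D}` for the logarithmic case. -/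
def rho1Dlog : Measure (ℝ × ℝ) :=
  Measure.map (fun t : ℝ => ((0 : ℝ), t))
    (volume.withDensity fun t => ENNReal.ofReal (2 / π * (max (1 - t ^ 2) 0) ^ ((1 : ℝ) / 2)))

/-- The measure `ψ(t) dt` placed on the vertical axis. -/
def rhoPsi (ψ : ℝ → ℝ) : Measure (ℝ × ℝ) :=
  Measure.map (fun t : ℝ => ((0 : ℝ), t)) (volume.withDensity fun t => ENNReal.ofReal (ψ t))


/-! ### The kernel near the vertical direction -/

/-- For a non-horizontal vector `(a, b)` the value of `Ω` at its angle only depends on the slope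
`a / b`, because `Ω` has period `π`. -/
lemma Omega_ang {Ω : ℝ → ℝ} (hΩ : SatisfiesH Ω) (a b : ℝ) (hb : b ≠ 0) :
    Ω (ang (a, b)) = Ω (π / 2 - Real.arctan (a / b)) := by
  obtain ⟨-, h2, -, h1⟩ := hΩ
  have hang : Ω (ang (a, b)) = Ω (Complex.arg ⟨a, b⟩) := by
    unfold ang
    split_ifs with h
    · rw [← h2 (-π)]
      simp only at h
      rw [h]; congr 1; ring
    · rfl
  rw [hang]
  set φ := Real.arctan (a / b) with hφ
  have hlo := Real.neg_pi_div_two_lt_arctan (a / b)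
  have hhi := Real.arctan_lt_pi_div_two (a / b)
  rw [← hφ] at hlo hhi
  have hc : 0 < Real.cos φ := Real.cos_arctan_pos _
  have ht : Real.tan φ = a / b := Real.tan_arctan _
  rw [Real.tan_eq_sin_div_cos, div_eq_div_iff hc.ne' hb] at ht
  obtain ⟨r, hr⟩ : ∃ r, r = b / Real.cos φ := ⟨_, rfl⟩
  have hbr : b = r * Real.cos φ := by rw [hr]; field_simp
  have har : a = r * Real.sin φ := by
    rw [hr]; field_simp; linarith
  rcases lt_or_gt_of_ne hb with hb' | hb'
  · have hz : (⟨a, b⟩ : ℂ) = ((-r : ℝ) : ℂ) *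
        (Complex.cos ((-(π / 2) - φ : ℝ) : ℂ) + Complex.sin ((-(π / 2) - φ : ℝ) : ℂ) * Complex.I) := by
      rw [← Complex.ofReal_cos, ← Complex.ofReal_sin]
      have e1 : Real.cos (-(π / 2) - φ) = - Real.sin φ := by
        rw [show -(π / 2) - φ = -(φ + π / 2) by ring, Real.cos_neg, Real.cos_add_pi_div_two]
      have e2 : Real.sin (-(π / 2) - φ) = - Real.cos φ := by
        rw [show -(π / 2) - φ = -(φ + π / 2) by ring, Real.sin_neg, Real.sin_add_pi_div_two]
      rw [e1, e2, ← Complex.mk_eq_add_mul_I]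
      apply Complex.ext
      · rw [Complex.re_ofReal_mul]; linarith
      · rw [Complex.im_ofReal_mul]; linarith
    have hr0 : r < 0 := by rw [hr]; exact div_neg_of_neg_of_pos hb' hc
    rw [hz, Complex.arg_mul_cos_add_sin_mul_I (by linarith)
      ⟨by linarith, by linarith [Real.pi_pos]⟩, ← h1]
    congr 1; ring
  · have hz : (⟨a, b⟩ : ℂ) = (r : ℂ) *
        (Complex.cos ((π / 2 - φ : ℝ) : ℂ) + Complex.sin ((π / 2 - φ : ℝ) : ℂ) * Complex.I) := by
      rw [← Complex.ofReal_cos, ← Complex.ofReal_sin, Real.cos_pi_div_two_sub,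
        Real.sin_pi_div_two_sub, ← Complex.mk_eq_add_mul_I]
      apply Complex.ext
      · rw [Complex.re_ofReal_mul]; exact har
      · rw [Complex.im_ofReal_mul]; exact hbr
    have hr0 : 0 < r := by rw [hr]; exact div_pos hb' hc
    rw [hz, Complex.arg_mul_cos_add_sin_mul_I hr0
      ⟨by linarith [Real.pi_pos], by linarith [Real.pi_pos]⟩]

lemma abs_arctan_le (q : ℝ) : |Real.arctan q| ≤ |q| := by
  have key : ∀ y : ℝ, 0 ≤ y → Real.arctan y ≤ y := by
    intro y hy
    have := Real.le_tan (Real.arctan_nonneg.2 hy) (Real.arctan_lt_pi_div_two y)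
    rwa [Real.tan_arctan] at this
  rcases le_total 0 q with h | h
  · rw [abs_of_nonneg h, abs_of_nonneg (Real.arctan_nonneg.2 h)]; exact key q h
  · rw [abs_of_nonpos h, abs_of_nonpos (Real.arctan_le_zero.2 h), ← Real.arctan_neg]
    exact key _ (by linarith)

/-- The gain from tilting: `|x|^{-s}` loses a quadratic amount, with `x = q²` the squared slope. -/
lemma rpow_gain {s x : ℝ} (hs0 : 0 < s) (hs1 : s < 1) (hx0 : 0 ≤ x) (hx1 : x ≤ 1) :
    (1 + x) ^ (-s / 2) ≤ 1 - s / 4 * x := by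
  have h1 : (1 + x) ^ (-s / 2) = (1 + -(x / (1 + x))) ^ (s / 2) := by
    rw [show 1 + -(x / (1 + x)) = (1 + x)⁻¹ by field_simp; ring, Real.inv_rpow (by linarith),
      ← Real.rpow_neg (by linarith)]
    congr 1; ring
  rw [h1]
  have h2 : x / 2 ≤ x / (1 + x) := by gcongr; linarith
  have h3 : x / (1 + x) ≤ 1 := by rw [div_le_one (by linarith)]; linarith
  have := rpow_one_add_le_one_add_mul_self (s := -(x / (1 + x))) (by linarith)
    (p := s / 2) (by linarith) (by linarith)
  nlinarith

lemma nrm_smul {a b : ℝ} (hb : b ≠ 0) : nrm (a, b) = |b| * Real.sqrt (1 + (a / b) ^ 2) := by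
  unfold nrm
  rw [← Real.sqrt_sq_eq_abs, ← Real.sqrt_mul (sq_nonneg b)]
  congr 1
  field_simp
  ring

/-- Since `κ > 2`, the angular penalty `C |q|^κ` of a small slope `q` is absorbed by the quadratic
gain of `rpow_gain`, at the price of halving its constant. -/
lemma radial_angular {s κ C δ₀ : ℝ} {Ω : ℝ → ℝ} (hs0 : 0 < s) (hs1 : s < 1) (hκ : 2 < κ)
    (hC : 0 < C) (hbound : ∀ θ : ℝ, |θ - π / 2| ≤ δ₀ → Ω θ ≤ 1 + C * |θ - π / 2| ^ κ)
    {ε : ℝ} (hε1 : ε ≤ 1) (hεδ : ε ≤ δ₀) (hεC : C * ε ^ (κ - 2) ≤ s / 8)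
    {q : ℝ} (hq : |q| ≤ ε) :
    (1 + q ^ 2) ^ (-s / 2) * Ω (π / 2 - Real.arctan q) ≤ 1 - s / 8 * q ^ 2 := by
  have ha := abs_arctan_le q
  have e : |π / 2 - Real.arctan q - π / 2| = |Real.arctan q| := by
    rw [show π / 2 - Real.arctan q - π / 2 = -Real.arctan q by ring, abs_neg]
  have h1 := hbound (π / 2 - Real.arctan q) (by rw [e]; linarith)
  rw [e] at h1
  have h2 : |Real.arctan q| ^ κ ≤ |q| ^ κ := Real.rpow_le_rpow (abs_nonneg _) ha (by linarith)
  have h3 : |q| ^ κ = |q| ^ (κ - 2) * q ^ 2 := by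
    rw [← sq_abs, ← Real.rpow_natCast, ← Real.rpow_add_of_nonneg (abs_nonneg _) (by linarith)
      (by norm_num)]
    congr 1; push_cast; ring
  have h4 : |q| ^ (κ - 2) ≤ ε ^ (κ - 2) := Real.rpow_le_rpow (abs_nonneg _) hq (by linarith)
  have hq1 : q ^ 2 ≤ 1 := by
    rw [← sq_abs]; nlinarith [abs_nonneg q]
  have h5 : Ω (π / 2 - Real.arctan q) ≤ 1 + s / 8 * q ^ 2 := by
    have : C * |Real.arctan q| ^ κ ≤ (C * ε ^ (κ - 2)) * q ^ 2 := by
      rw [mul_assoc]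
      apply mul_le_mul_of_nonneg_left _ hC.le
      rw [h3] at h2
      exact h2.trans (mul_le_mul_of_nonneg_right h4 (sq_nonneg q))
    nlinarith [sq_nonneg q]
  have h6 := rpow_gain hs0 hs1 (sq_nonneg q) hq1
  have h7 : 0 ≤ (1 + q ^ 2) ^ (-s / 2) := by positivity
  calc _ ≤ (1 + q ^ 2) ^ (-s / 2) * (1 + s / 8 * q ^ 2) := by gcongr
    _ ≤ (1 - s / 4 * q ^ 2) * (1 + s / 8 * q ^ 2) := by gcongr
    _ ≤ _ := by nlinarith [sq_nonneg (q * q), mul_pos hs0 hs0, mul_nonneg (mul_pos hs0 hs0).le (sq_nonneg (q * q))]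

/-- Effect of a horizontal displacement `ε a`, `|a| ≤ |b|`, on the interaction of two points of
the vertical axis with height difference `b`. -/
lemma kernel_tilt {s κ C δ₀ : ℝ} {Ω : ℝ → ℝ} (hs0 : 0 < s) (hs1 : s < 1) (hΩ : SatisfiesH Ω)
    (hκ : 2 < κ)
    (hC : 0 < C) (hbound : ∀ θ : ℝ, |θ - π / 2| ≤ δ₀ → Ω θ ≤ 1 + C * |θ - π / 2| ^ κ)
    {ε : ℝ} (hε0 : 0 < ε) (hε1 : ε ≤ 1) (hεδ : ε ≤ δ₀) (hεC : C * ε ^ (κ - 2) ≤ s / 8)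
    {a b : ℝ} (hb : b ≠ 0) (hab : |a| ≤ |b|) :
    nrm (ε * a, b) ^ (-s) * Ω (ang (ε * a, b)) + nrm (ε * a, b) ^ 2 ≤
      |b| ^ (-s) + b ^ 2 + ε ^ 2 * a ^ 2 - s / 8 * ε ^ 2 * ((a / b) ^ 2 * |b| ^ (-s)) := by
  set q := ε * a / b with hqdef
  have hb' : 0 < |b| := abs_pos.2 hb
  have hq : |q| ≤ ε := by
    rw [hqdef, abs_div, abs_mul, abs_of_pos hε0, div_le_iff₀ hb']
    gcongr
  have key := radial_angular hs0 hs1 hκ hC hbound hε1 hεδ hεC hq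
  rw [Omega_ang hΩ _ _ hb, nrm_smul hb, ← hqdef, Real.mul_rpow hb'.le (Real.sqrt_nonneg _),
    mul_pow, Real.sq_sqrt (by positivity), sq_abs]
  have e1 : Real.sqrt (1 + q ^ 2) ^ (-s) = (1 + q ^ 2) ^ (-s / 2) := by
    rw [Real.sqrt_eq_rpow, ← Real.rpow_mul (by positivity)]
    congr 1; ring
  have e2 : b ^ 2 * (1 + q ^ 2) = b ^ 2 + ε ^ 2 * a ^ 2 := by
    rw [hqdef]; field_simp
  have e3 : ε ^ 2 * (a / b) ^ 2 = q ^ 2 := by rw [hqdef]; ring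
  rw [e1, e2, mul_assoc]
  have : |b| ^ (-s) * ((1 + q ^ 2) ^ (-s / 2) * Ω (π / 2 - Real.arctan q)) ≤
      |b| ^ (-s) * (1 - s / 8 * q ^ 2) := by gcongr
  have e4 : s / 8 * ε ^ 2 * ((a / b) ^ 2 * |b| ^ (-s)) = |b| ^ (-s) * (s / 8 * q ^ 2) := by
    rw [← e3]; ring
  rw [e4]
  linarith

lemma Wkernel_vertical {s : ℝ} {Ω : ℝ → ℝ} (hΩ : SatisfiesH Ω) (hval : Ω (π / 2) = 1)
    {b : ℝ} (hb : b ≠ 0) : Wkernel s Ω (0, b) = ENNReal.ofReal (|b| ^ (-s) + b ^ 2) := by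
  unfold Wkernel
  rw [if_neg (by simp [hb]), Omega_ang hΩ _ _ hb, nrm_smul hb]
  simp [hval]

lemma measurable_Wkernel {s : ℝ} {Ω : ℝ → ℝ} (hΩ : SatisfiesH Ω) :
    Measurable (Wkernel s Ω) := by
  have hc : Measurable Ω := hΩ.1.continuous.measurable
  have hn : Measurable nrm := by
    unfold nrm; fun_prop
  have hz : Measurable fun x : ℝ × ℝ => Complex.arg ⟨x.1, x.2⟩ := by
    have : (fun x : ℝ × ℝ => Complex.arg ⟨x.1, x.2⟩) =
        fun x : ℝ × ℝ => Complex.arg ((x.1 : ℂ) + x.2 * Complex.I) := by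
      funext x; rw [Complex.mk_eq_add_mul_I]
    rw [this]; fun_prop
  have ha : Measurable ang := by
    unfold ang
    exact Measurable.ite (hz (measurableSet_singleton π)) measurable_const hz
  unfold Wkernel
  refine Measurable.ite (measurableSet_singleton _) measurable_const ?_
  have := hc.comp ha
  simp only [Function.comp_def] at this
  fun_prop

/-! ### The one-dimensional density -/

lemma C1_pos {s : ℝ} (hs0 : 0 < s) (hs1 : s < 1) : 0 < C1 s := by
  unfold C1
  have : 0 < Real.cos (s * π / 2) :=
    Real.cos_pos_of_mem_Ioo ⟨by nlinarith [Real.pi_pos], by nlinarith [Real.pi_pos]⟩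
  have := Real.pi_pos
  positivity

lemma R1_pos {s : ℝ} (hs0 : 0 < s) (hs1 : s < 1) : 0 < R1 s := by
  unfold R1 BetaR
  have h1 := C1_pos hs0 hs1
  have h2 := Real.Gamma_pos_of_pos (show (0 : ℝ) < 1 / 2 by norm_num)
  have h3 := Real.Gamma_pos_of_pos (show (0 : ℝ) < (3 + s) / 2 by linarith)
  have h4 := Real.Gamma_pos_of_pos (show (0 : ℝ) < 1 / 2 + (3 + s) / 2 by linarith)
  positivity

/-- `ρ₁(t) dt` is bounded by a multiple of Lebesgue measure on `[-R₁, R₁]`. -/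
lemma rho1meas_le {s : ℝ} (hs0 : 0 < s) (hs1 : s < 1) : ∃ M : ℝ, 0 < M ∧
    rho1meas s ≤ ENNReal.ofReal M • volume.restrict (Icc (-R1 s) (R1 s)) := by
  have hC := C1_pos hs0 hs1
  have hR := R1_pos hs0 hs1
  refine ⟨C1 s * (R1 s ^ 2) ^ ((1 + s) / 2), by positivity, ?_⟩
  unfold rho1meas
  rw [← withDensity_const, ← withDensity_indicator measurableSet_Icc]
  apply withDensity_mono
  refine Eventually.of_forall fun t => ?_
  by_cases ht : t ∈ Icc (-R1 s) (R1 s)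
  · rw [Set.indicator_of_mem ht]
    apply ENNReal.ofReal_le_ofReal
    unfold rho1
    gcongr
    apply max_le (by nlinarith [sq_nonneg t]) (sq_nonneg _)
  · rw [Set.indicator_of_notMem ht]
    have : R1 s ^ 2 - t ^ 2 ≤ 0 := by
      have h := ht
      rw [Set.mem_Icc, ← abs_le, not_le] at h
      rw [← sq_abs t]
      nlinarith
    simp [rho1, max_eq_right this, Real.zero_rpow (show (1 + s) / 2 ≠ 0 by linarith)]

/-- `ρ₁` is bounded below near the centre. -/
lemma rho1meas_ge {s : ℝ} (hs0 : 0 < s) (hs1 : s < 1) : ∃ m : ℝ, 0 < m ∧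
    ∀ h : ℝ, 0 < h → h ≤ R1 s / 2 →
      ENNReal.ofReal (m * h) ≤ rho1meas s (Icc 0 h) := by
  have hC := C1_pos hs0 hs1
  have hR := R1_pos hs0 hs1
  refine ⟨C1 s * (R1 s ^ 2 / 2) ^ ((1 + s) / 2), by positivity, fun h h0 hh => ?_⟩
  unfold rho1meas
  rw [withDensity_apply _ measurableSet_Icc]
  calc _ = ∫⁻ _ in Icc 0 h, ENNReal.ofReal (C1 s * (R1 s ^ 2 / 2) ^ ((1 + s) / 2)) := by
        rw [setLIntegral_const, Real.volume_Icc, sub_zero, ← ENNReal.ofReal_mul (by positivity)]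
    _ ≤ _ := by
        apply setLIntegral_mono' measurableSet_Icc
        intro t ht
        apply ENNReal.ofReal_le_ofReal
        unfold rho1
        gcongr
        apply le_max_of_le_left
        nlinarith [ht.1, ht.2]

lemma lintegral_kernel_ball {s : ℝ} (hs1 : s < 1) (r : ℝ) :
    ∫⁻ v in Metric.ball (0 : ℝ) r, ENNReal.ofReal (|v| ^ (-s) + v ^ 2) < ⊤ := by
  have h1 : IntegrableOn (fun v : ℝ => |v| ^ (-s)) (Metric.ball 0 r) := by
    apply integrableOn_ball_of_norm_le_rpow (C := 1) (α := s) (by simp) (by simpa using hs1)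
    · refine Eventually.of_forall fun v => ?_
      simp [Real.norm_eq_abs, abs_of_nonneg (Real.rpow_nonneg (abs_nonneg v) _)]
    · exact (by fun_prop : Measurable fun v : ℝ => |v| ^ (-s)).aestronglyMeasurable
  have h2 : IntegrableOn (fun v : ℝ => v ^ 2) (Metric.ball 0 r) :=
    ((continuous_pow 2).integrableOn_Icc (a := -r) (b := r)).mono_set (by
      rw [Real.ball_eq_Ioo]; simpa using Ioo_subset_Icc_self)
  exact (h1.add h2).lintegral_lt_top

lemma rho1meas_finite {s : ℝ} (hs0 : 0 < s) (hs1 : s < 1) : IsFiniteMeasure (rho1meas s) := by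
  obtain ⟨M, -, hM⟩ := rho1meas_le hs0 hs1
  refine ⟨(hM univ).trans_lt ?_⟩
  simp [ENNReal.mul_lt_top]

/-- The diagonal, where the kernel is infinite, is negligible. -/
lemma ae_ne {s : ℝ} (hs0 : 0 < s) (hs1 : s < 1) :
    ∀ᵐ p : ℝ × ℝ ∂(rho1meas s).prod (rho1meas s), p.1 - p.2 ≠ 0 := by
  have := rho1meas_finite hs0 hs1
  have hm : MeasurableSet {p : ℝ × ℝ | p.1 - p.2 ≠ 0} :=
    (measurableSet_eq_fun (f := fun p : ℝ × ℝ => p.1 - p.2) (by fun_prop)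
      measurable_const).compl
  rw [Measure.ae_prod_iff_ae_ae hm]
  refine Eventually.of_forall fun t => ?_
  have : ({t} : Set ℝ)ᶜ ∈ ae (rho1meas s) := by
    rw [compl_mem_ae_iff]
    exact withDensity_absolutelyContinuous _ _ (measure_singleton t)
  filter_upwards [this] with u hu
  exact sub_ne_zero.2 fun h => hu h.symm

/-- The Riesz kernel is locally integrable on the line, so `ρ_{1D}` has finite energy. -/
lemma energy_finite {s : ℝ} (hs0 : 0 < s) (hs1 : s < 1) :
    ∫⁻ p : ℝ × ℝ, ENNReal.ofReal (|p.1 - p.2| ^ (-s) + (p.1 - p.2) ^ 2)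
      ∂(rho1meas s).prod (rho1meas s) < ⊤ := by
  have := rho1meas_finite hs0 hs1
  obtain ⟨M, -, hM⟩ := rho1meas_le hs0 hs1
  set I := Icc (-R1 s) (R1 s) with hI
  set k : ℝ → ℝ≥0∞ := fun v => ENNReal.ofReal (|v| ^ (-s) + v ^ 2) with hk
  have hkm : Measurable k := by fun_prop
  set B := Metric.ball (0 : ℝ) (2 * R1 s + 1)
  set K := ∫⁻ v in B, k v with hK
  have hKfin : K < ⊤ := lintegral_kernel_ball hs1 _
  have hin : ∀ t ∈ I, ∫⁻ u, k (t - u) ∂rho1meas s ≤ ENNReal.ofReal M * K := by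
    intro t ht
    calc ∫⁻ u, k (t - u) ∂rho1meas s
        ≤ ∫⁻ u, k (t - u) ∂(ENNReal.ofReal M • volume.restrict I) := lintegral_mono' hM le_rfl
      _ = ENNReal.ofReal M * ∫⁻ u in I, k (t - u) := by rw [lintegral_smul_measure, smul_eq_mul]
      _ ≤ ENNReal.ofReal M * ∫⁻ u, B.indicator k (t - u) := by
          refine mul_le_mul_right ?_ _
          rw [hI, ← lintegral_indicator measurableSet_Icc, ← hI]
          apply lintegral_mono
          intro u
          by_cases hu : u ∈ I
          · have : t - u ∈ B := by
              rw [Metric.mem_ball, dist_zero_right, Real.norm_eq_abs, abs_lt]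
              constructor <;> linarith [ht.1, ht.2, hu.1, hu.2]
            simp only [Set.indicator_of_mem hu, Set.indicator_of_mem this, le_refl]
          · simp only [Set.indicator_of_notMem hu, zero_le]
      _ = ENNReal.ofReal M * K := by
          rw [lintegral_sub_left_eq_self, lintegral_indicator measurableSet_ball]
  rw [lintegral_prod _ (by fun_prop)]
  calc ∫⁻ t, ∫⁻ u, k (t - u) ∂rho1meas s ∂rho1meas s
      ≤ ∫⁻ t, ∫⁻ u, k (t - u) ∂rho1meas s ∂(ENNReal.ofReal M • volume.restrict I) :=
        lintegral_mono' hM le_rfl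
    _ = ENNReal.ofReal M * ∫⁻ t in I, ∫⁻ u, k (t - u) ∂rho1meas s := by
        rw [lintegral_smul_measure, smul_eq_mul]
    _ ≤ ENNReal.ofReal M * ∫⁻ t in I, ENNReal.ofReal M * K := by
        refine mul_le_mul_right ?_ _
        exact setLIntegral_mono' measurableSet_Icc hin
    _ < ⊤ := by
        rw [setLIntegral_const, hI, Real.volume_Icc]
        exact ENNReal.mul_lt_top ENNReal.ofReal_lt_top (ENNReal.mul_lt_top
          (ENNReal.mul_lt_top ENNReal.ofReal_lt_top hKfin) ENNReal.ofReal_lt_top)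

lemma energy_map {s : ℝ} (hs0 : 0 < s) (hs1 : s < 1) {Ω : ℝ → ℝ} (hΩ : SatisfiesH Ω)
    {G : ℝ → ℝ × ℝ} (hG : Measurable G) :
    energy s Ω (Measure.map G (rho1meas s)) =
      1 / 2 * ∫⁻ p : ℝ × ℝ, Wkernel s Ω (G p.1 - G p.2) ∂(rho1meas s).prod (rho1meas s) := by
  have := rho1meas_finite hs0 hs1
  have hW := measurable_Wkernel (s := s) hΩ
  unfold energy
  have h2 : Measurable fun p : (ℝ × ℝ) × (ℝ × ℝ) => Wkernel s Ω (p.1 - p.2) :=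
    hW.comp (by fun_prop)
  rw [lintegral_map h2.lintegral_prod_right' hG,
    lintegral_prod (fun p : ℝ × ℝ => Wkernel s Ω (G p.1 - G p.2))
      (hW.comp (by fun_prop : Measurable fun p : ℝ × ℝ => G p.1 - G p.2)).aemeasurable]
  congr 1
  apply lintegral_congr
  intro t
  exact lintegral_map (hW.comp (by fun_prop : Measurable fun y : ℝ × ℝ => G t - y)) hG

/-! ### The tent-shaped displacement -/

/-- The tent of height and half-width `h`. -/
def tent (h t : ℝ) : ℝ := max (h - |t|) 0

lemma tent_nonneg (h t : ℝ) : 0 ≤ tent h t := le_max_right _ _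

lemma tent_le {h : ℝ} (hh : 0 < h) (t : ℝ) : tent h t ≤ h :=
  max_le (by linarith [abs_nonneg t]) hh.le

lemma tent_lip (h t u : ℝ) : |tent h t - tent h u| ≤ |t - u| := by
  unfold tent
  refine (abs_max_sub_max_le_abs _ _ _).trans ?_
  rw [show h - |t| - (h - |u|) = |u| - |t| by ring, abs_sub_comm t u]
  exact abs_abs_sub_abs_le u t

lemma measurable_tent (h : ℝ) : Measurable (tent h) := by unfold tent; fun_prop

/-- Squared differences of the tent live on the cross `|t| ≤ h` or `|u| ≤ h`. -/
lemma tent_sq_le {h : ℝ} (hh : 0 < h) (t u : ℝ) :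
    (tent h t - tent h u) ^ 2 ≤ h ^ 2 * ((Icc (-h) h).indicator 1 t + (Icc (-h) h).indicator 1 u) := by
  have h0 : ∀ t, t ∉ Icc (-h) h → tent h t = 0 := by
    intro t ht
    rw [Set.mem_Icc, ← abs_le, not_le] at ht
    exact max_eq_right (by linarith)
  have hsq : (tent h t - tent h u) ^ 2 ≤ h ^ 2 := by
    apply sq_le_sq'
    · linarith [tent_nonneg h t, tent_le hh u]
    · linarith [tent_nonneg h u, tent_le hh t]
  by_cases ht : t ∈ Icc (-h) h <;> by_cases hu : u ∈ Icc (-h) h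
  · simp only [Set.indicator_of_mem ht, Set.indicator_of_mem hu, Pi.one_apply]
    nlinarith
  · simp only [Set.indicator_of_mem ht, Set.indicator_of_notMem hu, Pi.one_apply]
    nlinarith
  · simp only [Set.indicator_of_mem hu, Set.indicator_of_notMem ht, Pi.one_apply]
    nlinarith
  · simp [Set.indicator_of_notMem hu, Set.indicator_of_notMem ht, h0 t ht, h0 u hu]

/-- On one side of the tent the slope is `±1`, and the Riesz kernel is at least `h^{-s}` there. -/
lemma tent_slope_ge {s h : ℝ} (hs0 : 0 < s) {t u : ℝ} (htu : t - u ≠ 0) :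
    h ^ (-s) * (Icc 0 h ×ˢ Icc 0 h).indicator 1 (t, u) ≤
      ((tent h t - tent h u) / (t - u)) ^ 2 * |t - u| ^ (-s) := by
  by_cases hp : (t, u) ∈ Icc 0 h ×ˢ Icc 0 h
  · have hp' := hp
    obtain ⟨⟨ht0, ht1⟩, hu0, hu1⟩ := hp
    simp only at ht0 ht1 hu0 hu1
    have e : (tent h t - tent h u) / (t - u) = -1 := by
      unfold tent
      rw [abs_of_nonneg ht0, abs_of_nonneg hu0, max_eq_left (by linarith), max_eq_left (by linarith)]
      field_simp
      ring
    rw [Set.indicator_of_mem hp', e]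
    simp only [Pi.one_apply, mul_one, even_two, Even.neg_pow, one_pow, one_mul]
    apply Real.rpow_le_rpow_of_nonpos (abs_pos.2 htu) _ (by linarith)
    rw [abs_le]; constructor <;> linarith
  · rw [Set.indicator_of_notMem hp, mul_zero]
    positivity

/-! ### Comparison of the energies -/

lemma ofReal_indicator_one {α : Type*} (S : Set α) (x : α) :
    ENNReal.ofReal (S.indicator 1 x) = S.indicator 1 x := by
  by_cases hx : x ∈ S <;> simp [hx]

/-- Off the diagonal, the energy gained by the displacement `ε · tent h` on `[0, h]²` (left-hand
side) is paid for by the confinement cost on the cross around `[-h, h]` (right-hand side). -/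
lemma kernel_tent {s κ C δ₀ : ℝ} {Ω : ℝ → ℝ} (hs0 : 0 < s) (hs1 : s < 1) (hΩ : SatisfiesH Ω)
    (hval : Ω (π / 2) = 1) (hκ : 2 < κ)
    (hC : 0 < C) (hbound : ∀ θ : ℝ, |θ - π / 2| ≤ δ₀ → Ω θ ≤ 1 + C * |θ - π / 2| ^ κ)
    {ε : ℝ} (hε0 : 0 < ε) (hε1 : ε ≤ 1) (hεδ : ε ≤ δ₀) (hεC : C * ε ^ (κ - 2) ≤ s / 8)
    {h : ℝ} (hh : 0 < h) {p : ℝ × ℝ} (hp : p.1 - p.2 ≠ 0) :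
    Wkernel s Ω (ε * (tent h p.1 - tent h p.2), p.1 - p.2) +
        ENNReal.ofReal (s / 8 * ε ^ 2 * h ^ (-s)) * (Icc 0 h ×ˢ Icc 0 h).indicator 1 p ≤
      Wkernel s Ω (0, p.1 - p.2) + ENNReal.ofReal (ε ^ 2 * h ^ 2) *
        ((Icc (-h) h ×ˢ univ).indicator 1 p + (univ ×ˢ Icc (-h) h).indicator 1 p) := by
  obtain ⟨t, u⟩ := p
  simp only at hp ⊢
  have e1 : (Icc (-h) h ×ˢ (univ : Set ℝ)).indicator (1 : ℝ × ℝ → ℝ) (t, u) =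
      (Icc (-h) h).indicator 1 t := by
    by_cases ht : t ∈ Icc (-h) h <;> simp [Set.indicator, ht]
  have e2 : ((univ : Set ℝ) ×ˢ Icc (-h) h).indicator (1 : ℝ × ℝ → ℝ) (t, u) =
      (Icc (-h) h).indicator 1 u := by
    by_cases ht : u ∈ Icc (-h) h <;> simp [Set.indicator, ht]
  have hnn : ∀ (S : Set (ℝ × ℝ)) x, 0 ≤ S.indicator (1 : ℝ × ℝ → ℝ) x := fun S x =>
    Set.indicator_nonneg (fun _ _ => zero_le_one) x
  have hΩpos : 0 ≤ Ω (ang (ε * (tent h t - tent h u), t - u)) := (hΩ.2.2.1 _).le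
  have hnrm : 0 ≤ nrm (ε * (tent h t - tent h u), t - u) := Real.sqrt_nonneg _
  rw [Wkernel_vertical hΩ hval hp, Wkernel, if_neg (by simp [hp])]
  simp only [← ofReal_indicator_one]
  rw [← ENNReal.ofReal_mul (by positivity), ← ENNReal.ofReal_add (by positivity)
      (mul_nonneg (by positivity) (hnn _ _)),
    ← ENNReal.ofReal_add (hnn _ _) (hnn _ _), ← ENNReal.ofReal_mul (by positivity),
    ← ENNReal.ofReal_add (by positivity)
      (mul_nonneg (by positivity) (add_nonneg (hnn _ _) (hnn _ _))), e1, e2]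
  apply ENNReal.ofReal_le_ofReal
  have k1 := kernel_tilt hs0 hs1 hΩ hκ hC hbound hε0 hε1 hεδ hεC hp (tent_lip h t u)
  have k2 := mul_le_mul_of_nonneg_left (tent_sq_le hh t u) (sq_nonneg ε)
  have k3 := mul_le_mul_of_nonneg_left (tent_slope_ge (h := h) hs0 hp)
    (show 0 ≤ s / 8 * ε ^ 2 by positivity)
  linarith

/-- if `Ω` is degenerate at `π/2` (bounded by `1 + C|θ-π/2|^κ`, `κ > 2`),
then `ρ_{1D}` is not a `d_∞`-local minimizer: arbitrarily small perturbations by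
pushforward strictly decrease the energy. -/
theorem statement11 (s : ℝ) (hs0 : 0 < s) (hs1 : s < 1) (Ω : ℝ → ℝ) (hΩ : SatisfiesH Ω)
    (hval : Ω (π / 2) = 1) (κ C δ₀ : ℝ) (hκ : 2 < κ) (hC : 0 < C) (hδ₀ : 0 < δ₀)
    (hbound : ∀ θ : ℝ, |θ - π / 2| ≤ δ₀ → Ω θ ≤ 1 + C * |θ - π / 2| ^ κ) :
    ∀ δ : ℝ, 0 < δ → ∃ T : ℝ × ℝ → ℝ × ℝ, Measurable T ∧ (∀ x, nrm (T x - x) ≤ δ) ∧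
      energy s Ω (Measure.map T (rho1D s)) < energy s Ω (rho1D s) := by
  intro δ hδ
  have hfin := rho1meas_finite hs0 hs1
  obtain ⟨M, hM0, hM⟩ := rho1meas_le hs0 hs1
  obtain ⟨m, hm0, hm⟩ := rho1meas_ge hs0 hs1
  have hR := R1_pos hs0 hs1
  set μ := rho1meas s with hμ
  set V := (μ univ).toReal with hV
  have hV0 : 0 ≤ V := ENNReal.toReal_nonneg
  have hVμ : μ univ = ENNReal.ofReal V := (ENNReal.ofReal_toReal (measure_ne_top μ univ)).symm
  -- For small `h` the gain, of order `h ^ (2 - s)`, beats the cost, of order `h ^ 3`.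
  obtain ⟨h, hh0, hh1, hhR, hhq⟩ : ∃ h : ℝ, 0 < h ∧ h ≤ 1 ∧ h ≤ R1 s / 2 ∧
      4 * M * V * h < s / 8 * m ^ 2 := by
    set q := s / 8 * m ^ 2 / (4 * M * V + 1) with hq
    have hq0 : 0 < q := by positivity
    refine ⟨min 1 (min (R1 s / 2) q), by positivity, min_le_left _ _,
      (min_le_right _ _).trans (min_le_left _ _), ?_⟩
    have h1 : min 1 (min (R1 s / 2) q) ≤ q := (min_le_right _ _).trans (min_le_right _ _)
    have h2 : (4 * M * V + 1) * q = s / 8 * m ^ 2 := by rw [hq]; field_simp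
    have h3 : 4 * M * V * min 1 (min (R1 s / 2) q) ≤ 4 * M * V * q := by gcongr
    linarith
  -- The slopes created by the displacement are at most `ε`; since `κ > 2` the last condition makes
  -- the angular penalty negligible.
  obtain ⟨ε, hε0, hε1, hεδ₀, hεδ, hεC⟩ : ∃ ε : ℝ, 0 < ε ∧ ε ≤ 1 ∧ ε ≤ δ₀ ∧ ε ≤ δ ∧
      C * ε ^ (κ - 2) ≤ s / 8 := by
    set r := (s / 8 / C) ^ (κ - 2)⁻¹ with hr
    have hr0 : 0 < r := by positivity
    refine ⟨min (min 1 δ₀) (min δ r), by positivity, (min_le_left _ _).trans (min_le_left _ _),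
      (min_le_left _ _).trans (min_le_right _ _), (min_le_right _ _).trans (min_le_left _ _), ?_⟩
    have h1 : min (min 1 δ₀) (min δ r) ≤ r := (min_le_right _ _).trans (min_le_right _ _)
    have h2 : r ^ (κ - 2) = s / 8 / C := by
      rw [hr, ← Real.rpow_mul (by positivity), inv_mul_cancel₀ (by linarith), Real.rpow_one]
    calc C * min (min 1 δ₀) (min δ r) ^ (κ - 2) ≤ C * r ^ (κ - 2) := by gcongr
      _ = s / 8 := by rw [h2]; field_simp
  have hT : Measurable fun x : ℝ × ℝ => (x.1 + ε * tent h x.2, x.2) := by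
    have := measurable_tent h
    fun_prop
  refine ⟨fun x => (x.1 + ε * tent h x.2, x.2), hT, fun x => ?_, ?_⟩
  · have hx := tent_nonneg h x.2
    have hx' := tent_le hh0 x.2
    have e : nrm ((x.1 + ε * tent h x.2, x.2) - x) = ε * tent h x.2 := by
      simp [nrm, Real.sqrt_sq (mul_nonneg hε0.le hx)]
    simp only [e]
    nlinarith
  have hax : Measurable fun t : ℝ => ((0 : ℝ), t) := by fun_prop
  rw [rho1D, Measure.map_map hT hax, energy_map hs0 hs1 hΩ (hT.comp hax),
    energy_map hs0 hs1 hΩ hax]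
  have eT : ∀ p : ℝ × ℝ, ((fun x : ℝ × ℝ => (x.1 + ε * tent h x.2, x.2)) ∘ fun t : ℝ => ((0 : ℝ), t)) p.1
      - ((fun x : ℝ × ℝ => (x.1 + ε * tent h x.2, x.2)) ∘ fun t : ℝ => ((0 : ℝ), t)) p.2
      = (ε * (tent h p.1 - tent h p.2), p.1 - p.2) := by
    intro p
    simp [mul_sub]
  simp only [eT, Prod.mk_sub_mk, sub_zero, ← hμ]
  have hE0 : ∫⁻ p : ℝ × ℝ, Wkernel s Ω (0, p.1 - p.2) ∂μ.prod μ < ⊤ := by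
    refine lt_of_eq_of_lt (lintegral_congr_ae ?_) (energy_finite hs0 hs1)
    filter_upwards [ae_ne hs0 hs1] with p hp
    exact Wkernel_vertical hΩ hval hp
  have hmono : ∫⁻ p : ℝ × ℝ, (Wkernel s Ω (ε * (tent h p.1 - tent h p.2), p.1 - p.2) +
        ENNReal.ofReal (s / 8 * ε ^ 2 * h ^ (-s)) * (Icc 0 h ×ˢ Icc 0 h).indicator 1 p) ∂μ.prod μ ≤
      ∫⁻ p : ℝ × ℝ, (Wkernel s Ω (0, p.1 - p.2) + ENNReal.ofReal (ε ^ 2 * h ^ 2) *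
        ((Icc (-h) h ×ˢ univ).indicator 1 p + (univ ×ˢ Icc (-h) h).indicator 1 p)) ∂μ.prod μ := by
    apply lintegral_mono_ae
    filter_upwards [ae_ne hs0 hs1] with p hp
    exact kernel_tent hs0 hs1 hΩ hval hκ hC hbound hε0 hε1 hεδ₀ hεC hh0 hp
  have mJ : MeasurableSet (Icc 0 h ×ˢ Icc 0 h) := measurableSet_Icc.prod measurableSet_Icc
  have mI : MeasurableSet (Icc (-h) h ×ˢ (univ : Set ℝ)) := measurableSet_Icc.prod .univ
  have mI' : MeasurableSet ((univ : Set ℝ) ×ˢ Icc (-h) h) := MeasurableSet.univ.prod measurableSet_Icc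
  have m1 : ∀ {S : Set (ℝ × ℝ)}, MeasurableSet S → Measurable (S.indicator (1 : ℝ × ℝ → ℝ≥0∞)) :=
    fun hS => measurable_one.indicator hS
  have m2 := (m1 mI).add (m1 mI')
  simp only [Pi.add_def] at m2
  rw [lintegral_add_right _ ((m1 mJ).const_mul _), lintegral_const_mul _ (m1 mJ),
    lintegral_indicator_one mJ, Measure.prod_prod,
    lintegral_add_right _ (m2.const_mul _),
    lintegral_const_mul _ m2, lintegral_add_left (m1 mI),
    lintegral_indicator_one mI, lintegral_indicator_one mI', Measure.prod_prod,
    Measure.prod_prod] at hmono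
  have hI : μ (Icc (-h) h) ≤ ENNReal.ofReal (M * (2 * h)) := by
    refine (hM _).trans ?_
    rw [Measure.smul_apply, smul_eq_mul, ENNReal.ofReal_mul hM0.le]
    refine mul_le_mul_right ((Measure.restrict_apply_le _ _).trans ?_) _
    rw [Real.volume_Icc]
    apply ENNReal.ofReal_le_ofReal; linarith
  have hJ := hm h hh0 hhR
  have hcost : ENNReal.ofReal (ε ^ 2 * h ^ 2) *
      (μ (Icc (-h) h) * μ univ + μ univ * μ (Icc (-h) h)) <
      ENNReal.ofReal (s / 8 * ε ^ 2 * h ^ (-s)) * (μ (Icc 0 h) * μ (Icc 0 h)) := by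
    calc _ ≤ ENNReal.ofReal (ε ^ 2 * h ^ 2) * (ENNReal.ofReal (M * (2 * h)) * ENNReal.ofReal V +
          ENNReal.ofReal V * ENNReal.ofReal (M * (2 * h))) := by rw [hVμ]; gcongr
      _ = ENNReal.ofReal (ε ^ 2 * h ^ 2 * (4 * M * V * h)) := by
        rw [← ENNReal.ofReal_mul (by positivity), ← ENNReal.ofReal_mul (by positivity),
          ← ENNReal.ofReal_add (by positivity) (by positivity), ← ENNReal.ofReal_mul (by positivity)]
        congr 1; ring
      _ < ENNReal.ofReal (s / 8 * ε ^ 2 * h ^ (-s) * (m * h * (m * h))) := by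
        apply (ENNReal.ofReal_lt_ofReal_iff (by positivity)).2
        have h1 : 1 ≤ h ^ (-s) := Real.one_le_rpow_of_pos_of_le_one_of_nonpos hh0 hh1 (by linarith)
        calc ε ^ 2 * h ^ 2 * (4 * M * V * h) < ε ^ 2 * h ^ 2 * (s / 8 * m ^ 2) := by gcongr
          _ ≤ ε ^ 2 * h ^ 2 * (s / 8 * m ^ 2) * h ^ (-s) :=
            le_mul_of_one_le_right (by positivity) h1
          _ = _ := by ring
      _ = ENNReal.ofReal (s / 8 * ε ^ 2 * h ^ (-s)) *
          (ENNReal.ofReal (m * h) * ENNReal.ofReal (m * h)) := by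
        rw [← ENNReal.ofReal_mul (by positivity), ← ENNReal.ofReal_mul (by positivity)]
      _ ≤ _ := by gcongr
  -- The finite energy of `ρ_{1D}` may be cancelled.
  rw [ENNReal.mul_lt_mul_iff_right (by simp) (by simp)]
  by_contra! hcon
  have := (add_le_add_left hcon _).trans hmono
  rw [ENNReal.add_le_add_iff_left hE0.ne] at this
  exact absurd hcost (not_lt.2 this)

end Aniso
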